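/- arXiv:2305.05863 — 2 statements merged into one kernel-verified Lean document; each statement's English description precedes it below -/
import Mathlib

section
/- Let N and d be positive integers, let w₁,…,w_N be strictly positive real weights with W = diag(w₁,…,w_N), let A ∈ ℝ^{N×d} satisfy AᵀWA = I_d, let f ∈ ℝ^N and α = AᵀWf. Given λ > 0, penalty parameters μ₁,…,μ_d > 0 and filter values h₁,…,h_d ∈ [0,1], let β ∈ ℝ^d be the hybrid coefficient vector β_ℓ = h_ℓ·S_{λμ_ℓ}(α_ℓ). Then ‖W^{1/2}(Aβ)‖₂² + ‖W^{1/2}(f − Aβ)‖₂² = fᵀWf − 2K. -/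
/-!
Writing `p = Aβ`, expansion of the square gives
`‖p‖² + ‖f - p‖² = ‖f‖² + 2 (‖p‖² - ⟨f, p⟩)` in the `W`-weighted inner product.
Discrete orthonormality turns `‖p‖²` into `∑ ℓ, β ℓ ^ 2` (`sum_weight_mul_sq`), and the definition
of `α` turns `⟨f, p⟩` into `∑ ℓ, β ℓ * α ℓ` (`sum_weight_mul_mul`), so the last bracket is `-K`.
-/

open Finset

/-- The soft thresholding operator `S_k(a) = max(0, a−k) + min(0, a+k)`. -/
def softThreshold (k a : ℝ) : ℝ := max 0 (a - k) + min 0 (a + k)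

/-- Discrete Parseval identity: `‖W^{1/2}(Aβ)‖₂² = ‖β‖₂²` when `AᵀWA = I`. -/
lemma sum_weight_mul_sq {N d : ℕ} (w : Fin N → ℝ) (A : Fin N → Fin d → ℝ)
    (horth : ∀ i k : Fin d, ∑ j, w j * A j i * A j k = if i = k then 1 else 0)
    (β : Fin d → ℝ) :
    ∑ j, w j * (∑ ℓ, A j ℓ * β ℓ) ^ 2 = ∑ ℓ, β ℓ ^ 2 := by
  calc ∑ j, w j * (∑ ℓ, A j ℓ * β ℓ) ^ 2
      = ∑ j, ∑ i, ∑ k, β i * β k * (w j * A j i * A j k) := by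
        refine Finset.sum_congr rfl fun j _ => ?_
        rw [sq, Finset.sum_mul_sum, Finset.mul_sum]
        refine Finset.sum_congr rfl fun i _ => ?_
        rw [Finset.mul_sum]
        exact Finset.sum_congr rfl fun k _ => by ring
    _ = ∑ i, ∑ k, β i * β k * ∑ j, w j * A j i * A j k := by
        rw [Finset.sum_comm]
        refine Finset.sum_congr rfl fun i _ => ?_
        rw [Finset.sum_comm]
        exact Finset.sum_congr rfl fun k _ => by rw [Finset.mul_sum]
    _ = ∑ ℓ, β ℓ ^ 2 := by simp [horth, sq]

/-- `fᵀW(Aβ) = βᵀ(AᵀWf)`. -/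
lemma sum_weight_mul_mul {N d : ℕ} (w f : Fin N → ℝ) (A : Fin N → Fin d → ℝ)
    (β : Fin d → ℝ) :
    ∑ j, w j * f j * ∑ ℓ, A j ℓ * β ℓ = ∑ ℓ, β ℓ * ∑ j, w j * f j * A j ℓ := by
  simp_rw [Finset.mul_sum]
  rw [Finset.sum_comm]
  exact Finset.sum_congr rfl fun ℓ _ => Finset.sum_congr rfl fun j _ => by ring

/-- Pythagoras-type identity for the hybrid hyperinterpolant:
`‖W^{1/2}(Aβ)‖₂² + ‖W^{1/2}(f − Aβ)‖₂² = fᵀWf − 2K`. -/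
theorem hybrid_pythagoras
    (N d : ℕ) (hN : 0 < N) (hd : 0 < d)
    (w : Fin N → ℝ) (hw : ∀ j, 0 < w j)
    (A : Fin N → Fin d → ℝ)
    (horth : ∀ i k : Fin d, ∑ j, w j * A j i * A j k = if i = k then 1 else 0)
    (f : Fin N → ℝ) (α : Fin d → ℝ)
    (hα : ∀ ℓ, α ℓ = ∑ j, w j * f j * A j ℓ)
    (lam : ℝ) (hlam : 0 < lam)
    (μ : Fin d → ℝ) (hμ : ∀ ℓ, 0 < μ ℓ)
    (h : Fin d → ℝ) (hh : ∀ ℓ, h ℓ ∈ Set.Icc (0 : ℝ) 1)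
    (β : Fin d → ℝ)
    (hβ : ∀ ℓ, β ℓ = h ℓ * softThreshold (lam * μ ℓ) (α ℓ)) :
    (∑ j, w j * (∑ ℓ, A j ℓ * β ℓ) ^ 2)
      + ∑ j, w j * (f j - ∑ ℓ, A j ℓ * β ℓ) ^ 2
      = (∑ j, w j * f j ^ 2)
        - 2 * ∑ ℓ, (h ℓ * softThreshold (lam * μ ℓ) (α ℓ) * α ℓ
            - (h ℓ * softThreshold (lam * μ ℓ) (α ℓ)) ^ 2) := by
  simp_rw [← hβ]
  have hexp : ∑ j, w j * (f j - ∑ ℓ, A j ℓ * β ℓ) ^ 2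
      = ∑ j, w j * f j ^ 2 - 2 * ∑ j, w j * f j * ∑ ℓ, A j ℓ * β ℓ
        + ∑ j, w j * (∑ ℓ, A j ℓ * β ℓ) ^ 2 := by
    rw [Finset.mul_sum, ← Finset.sum_sub_distrib, ← Finset.sum_add_distrib]
    exact Finset.sum_congr rfl fun j _ => by ring
  have hcross : ∑ j, w j * f j * ∑ ℓ, A j ℓ * β ℓ = ∑ ℓ, β ℓ * α ℓ := by
    simp_rw [hα]
    exact sum_weight_mul_mul w f A β
  rw [hexp, hcross, sum_weight_mul_sq w A horth β, Finset.sum_sub_distrib]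
  ring
end

section
/- Under the continuous quadrature setup, for every bounded measurable g : Ω → ℝ, the hyperinterpolant ℒg = ∑_{ℓ=1}^d α_ℓ(g) Φ_ℓ satisfies the error estimate ‖ℒg − g‖₂ ≤ 2·V^{1/2}·E(g), where E(g) = inf{ ‖g − p‖_∞ : p ∈ span{Φ₁,…,Φ_d} } is the error of best uniform approximation of g from the span of Φ₁,…,Φ_d. -/
open Finset MeasureTheory

/-!
The hyperinterpolation operator `ℒ` reproduces every `p = ∑ c ℓ * Φ ℓ`, by discrete orthonormality,
so `ℒ g - g = ℒ h - h` with `h = g - p`. Write `M` for the supremum of `|h|`. Continuous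
orthonormality (Parseval) gives `∫ (ℒ h)² = ∑ α_ℓ(h)²`, and discrete orthonormality (Bessel) gives
`∑ α_ℓ(h)² ≤ ∑ w_j h(x_j)² ≤ V M²`, because the positive weights sum to `V`. Since also
`∫ h² ≤ V M²`, the inequality `(a - b)² ≤ 2 a² + 2 b²` yields `∫ (ℒ h - h)² ≤ 4 V M²`.
Taking square roots and then the infimum over `p` finishes the proof.
-/

/-- Parseval's identity for a finite orthonormal system. -/
lemma integral_sq_sum_of_orthonormal {Ω : Type*} [MeasurableSpace Ω] (ω : Measure Ω) {d : ℕ}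
    (Φ : Fin d → Ω → ℝ) (hint : ∀ i k, Integrable (fun y => Φ i y * Φ k y) ω)
    (horth : ∀ i k : Fin d, ∫ x, Φ i x * Φ k x ∂ω = if i = k then 1 else 0)
    (a : Fin d → ℝ) :
    ∫ y, (∑ ℓ, a ℓ * Φ ℓ y) ^ 2 ∂ω = ∑ ℓ, a ℓ ^ 2 := by
  have hexp : ∀ y, (∑ ℓ, a ℓ * Φ ℓ y) ^ 2 = ∑ i, ∑ k, (a i * a k) * (Φ i y * Φ k y) := by
    intro y
    rw [sq, Finset.sum_mul_sum]
    exact Finset.sum_congr rfl fun i _ => Finset.sum_congr rfl fun k _ => by ring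
  simp_rw [hexp]
  rw [integral_finsetSum _ fun i _ => integrable_finsetSum _ fun k _ => (hint i k).const_mul _]
  refine Finset.sum_congr rfl fun i _ => ?_
  rw [integral_finsetSum _ fun k _ => (hint i k).const_mul _]
  simp_rw [integral_const_mul, horth]
  simp [sq]

/-- The hyperinterpolation coefficients of `∑ ℓ, a ℓ * Φ ℓ` are the `a ℓ`. -/
lemma discrete_coeff_of_span {Ω : Type*} {d N : ℕ} (Φ : Fin d → Ω → ℝ)
    (x : Fin N → Ω) (w : Fin N → ℝ)
    (hdorth : ∀ i k : Fin d, ∑ j, w j * Φ i (x j) * Φ k (x j) = if i = k then 1 else 0)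
    (a : Fin d → ℝ) (ℓ : Fin d) :
    ∑ j, w j * (∑ k, a k * Φ k (x j)) * Φ ℓ (x j) = a ℓ := by
  have h : ∀ j, w j * (∑ k, a k * Φ k (x j)) * Φ ℓ (x j)
      = ∑ k, a k * (w j * Φ k (x j) * Φ ℓ (x j)) := by
    intro j
    rw [Finset.mul_sum, Finset.sum_mul]
    exact Finset.sum_congr rfl fun k _ => by ring
  simp_rw [h]
  rw [Finset.sum_comm]
  simp_rw [← Finset.mul_sum, hdorth]
  simp

/-- Bessel's inequality for the semi-inner product `∑ j, w j * f (x j) * g (x j)`. -/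
lemma discrete_bessel {Ω : Type*} {d N : ℕ} (Φ : Fin d → Ω → ℝ)
    (x : Fin N → Ω) (w : Fin N → ℝ) (hw : ∀ j, 0 < w j)
    (hdorth : ∀ i k : Fin d, ∑ j, w j * Φ i (x j) * Φ k (x j) = if i = k then 1 else 0)
    (h : Ω → ℝ) :
    ∑ ℓ, (∑ j, w j * h (x j) * Φ ℓ (x j)) ^ 2 ≤ ∑ j, w j * h (x j) ^ 2 := by
  set a : Fin d → ℝ := fun ℓ => ∑ j, w j * h (x j) * Φ ℓ (x j) with ha
  set L : Ω → ℝ := fun y => ∑ ℓ, a ℓ * Φ ℓ y with hL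
  -- pairing any `f` with `L` sums the coefficients of `f` against those of `h`
  have pair : ∀ f : Ω → ℝ, ∑ j, w j * f (x j) * L (x j)
      = ∑ ℓ, a ℓ * ∑ j, w j * f (x j) * Φ ℓ (x j) := by
    intro f
    simp only [hL, Finset.mul_sum]
    rw [Finset.sum_comm]
    exact Finset.sum_congr rfl fun i _ => Finset.sum_congr rfl fun k _ => by ring
  have h1 : ∑ j, w j * h (x j) * L (x j) = ∑ ℓ, a ℓ ^ 2 := by
    rw [pair h]
    exact Finset.sum_congr rfl fun i _ => (sq (a i)).symm
  have h2 : ∑ j, w j * L (x j) * L (x j) = ∑ ℓ, a ℓ ^ 2 := by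
    rw [pair L]
    refine Finset.sum_congr rfl fun i _ => ?_
    rw [discrete_coeff_of_span Φ x w hdorth a i, sq]
  have h3 : 0 ≤ ∑ j, w j * (h (x j) - L (x j)) ^ 2 :=
    Finset.sum_nonneg fun j _ => mul_nonneg (hw j).le (sq_nonneg _)
  have h4 : ∑ j, w j * (h (x j) - L (x j)) ^ 2
      = ∑ j, w j * h (x j) ^ 2 - 2 * ∑ j, w j * h (x j) * L (x j)
        + ∑ j, w j * L (x j) * L (x j) := by
    rw [Finset.mul_sum, ← Finset.sum_sub_distrib, ← Finset.sum_add_distrib]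
    exact Finset.sum_congr rfl fun j _ => by ring
  linarith

/-- A bounded measurable function is integrable for a finite measure. -/
lemma integrable_of_measurable_of_abs_le {Ω : Type*} [MeasurableSpace Ω] (ω : Measure Ω)
    [IsFiniteMeasure ω] {f : Ω → ℝ} (hf : Measurable f) (hb : ∃ C : ℝ, ∀ y, |f y| ≤ C) :
    Integrable f ω := by
  obtain ⟨C, hC⟩ := hb
  exact Integrable.of_bound hf.aestronglyMeasurable C (.of_forall hC)

lemma exists_abs_mul_le {Ω : Type*} {f g : Ω → ℝ} (hf : ∃ C : ℝ, ∀ y, |f y| ≤ C)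
    (hg : ∃ C : ℝ, ∀ y, |g y| ≤ C) : ∃ C : ℝ, ∀ y, |f y * g y| ≤ C := by
  obtain ⟨C, hC⟩ := hf
  obtain ⟨D, hD⟩ := hg
  refine ⟨C * D, fun y => ?_⟩
  rw [abs_mul]
  exact mul_le_mul (hC y) (hD y) (abs_nonneg _) ((abs_nonneg _).trans (hC y))

lemma exists_abs_sum_le {Ω : Type*} {d : ℕ} {Φ : Fin d → Ω → ℝ}
    (hΦ : ∀ ℓ, ∃ C : ℝ, ∀ y, |Φ ℓ y| ≤ C) (c : Fin d → ℝ) :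
    ∃ C : ℝ, ∀ y, |∑ ℓ, c ℓ * Φ ℓ y| ≤ C := by
  choose C hC using hΦ
  refine ⟨∑ ℓ, |c ℓ| * C ℓ, fun y => (Finset.abs_sum_le_sum_abs _ _).trans ?_⟩
  refine Finset.sum_le_sum fun ℓ _ => ?_
  rw [abs_mul]
  exact mul_le_mul_of_nonneg_left (hC ℓ y) (abs_nonneg _)

/-- error estimate for hyperinterpolation, `‖ℒg − g‖₂ ≤ 2·V^{1/2}·E(g)`,
where `E(g)` is the error of best uniform approximation of `g` from `span{Φ₁,…,Φ_d}`. -/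
theorem hyperinterpolation_error
    {Ω : Type*} [MeasurableSpace Ω] [Nonempty Ω]
    (ω : Measure Ω) [IsFiniteMeasure ω]
    (V : ℝ) (hV : V = (ω Set.univ).toReal)
    (d N : ℕ) (hd : 0 < d) (hN : 0 < N)
    (Φ : Fin d → Ω → ℝ)
    (hΦmeas : ∀ ℓ, Measurable (Φ ℓ))
    (hΦbdd : ∀ ℓ, ∃ C : ℝ, ∀ x, |Φ ℓ x| ≤ C)
    (horth : ∀ i k : Fin d, ∫ x, Φ i x * Φ k x ∂ω = if i = k then 1 else 0)
    (x : Fin N → Ω) (w : Fin N → ℝ) (hw : ∀ j, 0 < w j)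
    (hwV : ∑ j, w j = V)
    (hdorth : ∀ i k : Fin d,
      ∑ j, w j * Φ i (x j) * Φ k (x j) = if i = k then 1 else 0)
    (g : Ω → ℝ) (hg : Measurable g) (hgb : ∃ C : ℝ, ∀ y, |g y| ≤ C) :
    Real.sqrt (∫ y, ((∑ ℓ, (∑ j, w j * g (x j) * Φ ℓ (x j)) * Φ ℓ y) - g y) ^ 2 ∂ω)
      ≤ 2 * Real.sqrt V *
        sInf {r : ℝ | ∃ c : Fin d → ℝ, r = ⨆ y, |g y - ∑ ℓ, c ℓ * Φ ℓ y|} := by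
  have hVpos : 0 < V := by
    rw [← hwV]
    exact Finset.sum_pos (fun j _ => hw j) ⟨⟨0, hN⟩, Finset.mem_univ _⟩
  have hs : 0 < 2 * Real.sqrt V := by positivity
  rw [mul_comm, ← div_le_iff₀ hs]
  refine le_csInf ⟨_, 0, rfl⟩ ?_
  rintro r ⟨c, rfl⟩
  rw [div_le_iff₀ hs]
  set h : Ω → ℝ := fun y => g y - ∑ ℓ, c ℓ * Φ ℓ y with hh
  set M : ℝ := ⨆ y, |h y| with hM
  have hhmeas : Measurable h :=
    hg.sub (Finset.measurable_sum _ fun ℓ _ => (hΦmeas ℓ).const_mul _)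
  have hhbdd : ∃ C : ℝ, ∀ y, |h y| ≤ C := by
    obtain ⟨C, hC⟩ := hgb
    obtain ⟨D, hD⟩ := exists_abs_sum_le hΦbdd c
    exact ⟨C + D, fun y => (abs_sub _ _).trans (add_le_add (hC y) (hD y))⟩
  have hle : ∀ y, |h y| ≤ M := by
    obtain ⟨C, hC⟩ := hhbdd
    exact fun y => le_ciSup (f := fun y => |h y|) ⟨C, by rintro _ ⟨y, rfl⟩; exact hC y⟩ y
  have hM0 : 0 ≤ M := Real.iSup_nonneg fun y => abs_nonneg _
  have hsq : ∀ y, h y ^ 2 ≤ M ^ 2 := fun y => sq_le_sq' (abs_le.1 (hle y)).1 (abs_le.1 (hle y)).2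
  set a : Fin d → ℝ := fun ℓ => ∑ j, w j * h (x j) * Φ ℓ (x j) with ha
  set L : Ω → ℝ := fun y => ∑ ℓ, a ℓ * Φ ℓ y with hL
  have hLmeas : Measurable L := Finset.measurable_sum _ fun ℓ _ => (hΦmeas ℓ).const_mul _
  have hLbdd : ∃ C : ℝ, ∀ y, |L y| ≤ C := exists_abs_sum_le hΦbdd a
  -- the error is unchanged when `g` is replaced by `h`, since `ℒ` reproduces the span
  have hcoef : ∀ ℓ, ∑ j, w j * g (x j) * Φ ℓ (x j) = a ℓ + c ℓ := by
    intro ℓ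
    rw [← discrete_coeff_of_span Φ x w hdorth c ℓ]
    simp only [ha, ← Finset.sum_add_distrib]
    exact Finset.sum_congr rfl fun j _ => by simp only [hh]; ring
  have herr : ∀ y, (∑ ℓ, (∑ j, w j * g (x j) * Φ ℓ (x j)) * Φ ℓ y) - g y = L y - h y := by
    intro y
    simp only [hcoef, add_mul, Finset.sum_add_distrib, hL, hh]
    ring
  simp_rw [herr]
  have hintL : Integrable (fun y => L y ^ 2) ω := by
    simp_rw [sq]
    exact integrable_of_measurable_of_abs_le ω (hLmeas.mul hLmeas) (exists_abs_mul_le hLbdd hLbdd)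
  have hinth : Integrable (fun y => h y ^ 2) ω := by
    simp_rw [sq]
    exact integrable_of_measurable_of_abs_le ω (hhmeas.mul hhmeas) (exists_abs_mul_le hhbdd hhbdd)
  have hL2 : ∫ y, L y ^ 2 ∂ω ≤ V * M ^ 2 := by
    rw [integral_sq_sum_of_orthonormal ω Φ (fun i k => integrable_of_measurable_of_abs_le ω
      ((hΦmeas i).mul (hΦmeas k)) (exists_abs_mul_le (hΦbdd i) (hΦbdd k))) horth a]
    refine (discrete_bessel Φ x w hw hdorth h).trans ?_
    rw [← hwV, Finset.sum_mul]
    exact Finset.sum_le_sum fun j _ => mul_le_mul_of_nonneg_left (hsq _) (hw j).le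
  have hh2 : ∫ y, h y ^ 2 ∂ω ≤ V * M ^ 2 := by
    refine (integral_mono hinth (integrable_const (M ^ 2)) hsq).trans_eq ?_
    rw [integral_const, smul_eq_mul, hV, measureReal_def]
  have hmain : ∫ y, (L y - h y) ^ 2 ∂ω ≤ (M * (2 * Real.sqrt V)) ^ 2 := by
    calc ∫ y, (L y - h y) ^ 2 ∂ω
        ≤ ∫ y, (2 * L y ^ 2 + 2 * h y ^ 2) ∂ω := by
          refine integral_mono_of_nonneg (.of_forall fun y => sq_nonneg _)
            ((hintL.const_mul 2).add (hinth.const_mul 2)) (.of_forall fun y => ?_)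
          have := sq_nonneg (L y + h y)
          simp only
          nlinarith
      _ = 2 * ∫ y, L y ^ 2 ∂ω + 2 * ∫ y, h y ^ 2 ∂ω := by
          rw [integral_add (hintL.const_mul 2) (hinth.const_mul 2), integral_const_mul,
            integral_const_mul]
      _ ≤ 4 * (V * M ^ 2) := by linarith
      _ = (M * (2 * Real.sqrt V)) ^ 2 := by
          rw [mul_pow, mul_pow, Real.sq_sqrt hVpos.le]; ring
  exact Real.sqrt_le_iff.2 ⟨by positivity, hmain⟩
end
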